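/- Let X be a real Banach space which is a universal BPB domain space (the pair (X,Z) has the Bishop–Phelps–Bollobás property for every real Banach space Z), and suppose X admits an equivalent strictly convex norm (there is a norm ‖·‖' on X, equivalent to the original norm, making X strictly convex). Then the set of extreme points of the closed unit ball B_X is dense in the unit sphere S_X. -/

import Mathlib

open scoped ENNReal

/-- A pair `(X, Y)` of normed spaces has the Bishop–Phelps–Bollobás property with the
function `η : (0,1) → (0,∞)` (encoded as `η : ℝ → ℝ`, relevant only on `(0,1)`). -/
def BPBpWith (X Y : Type*) [NormedAddCommGroup X] [NormedSpace ℝ X]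
    [NormedAddCommGroup Y] [NormedSpace ℝ Y] (η : ℝ → ℝ) : Prop :=
  ∀ ε ∈ Set.Ioo (0 : ℝ) 1, ∀ (T₀ : X →L[ℝ] Y) (x₀ : X),
    ‖T₀‖ = 1 → ‖x₀‖ = 1 → 1 - η ε < ‖T₀ x₀‖ →
      ∃ (S : X →L[ℝ] Y) (x : X),
        ‖x‖ = 1 ∧ ‖S‖ = 1 ∧ ‖S x‖ = 1 ∧ ‖x - x₀‖ < ε ∧ ‖S - T₀‖ < ε

/-- The pair `(X, Y)` has the Bishop–Phelps–Bollobás property. -/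
def HasBPBp (X Y : Type*) [NormedAddCommGroup X] [NormedSpace ℝ X]
    [NormedAddCommGroup Y] [NormedSpace ℝ Y] : Prop :=
  ∃ η : ℝ → ℝ, (∀ ε ∈ Set.Ioo (0 : ℝ) 1, 0 < η ε) ∧ BPBpWith X Y η

/-!
Let `f : X → Y` be a bounded injective operator, with `Y` strictly convex. For `t > 0` the norms
`√(‖x‖² + ‖t • f x‖²)` on `X` are strictly convex, and they tend to `‖x‖` as `t → 0`. Apply the
Bishop–Phelps–Bollobás property to the `ℓ^∞`-sum of all the resulting spaces: a single function `η`
then serves all of them, so `t` can be taken small enough that the normalised identity map into the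
`t`-th summand nearly attains its norm at a given unit vector `x₀`. The operator `S` close to it
that attains its norm at some `x` near `x₀` must do so in the `t`-th coordinate, the other ones
being small. That coordinate of `S` is still injective, and an injective operator into a strictly
convex space attains its norm only at extreme points of the unit ball.
-/

section ExtremePoints

theorem mem_extremePoints_of_map_mem_extremePoints {𝕜 E F : Type*} [Semiring 𝕜] [PartialOrder 𝕜]
    [AddCommMonoid E] [Module 𝕜 E] [AddCommMonoid F] [Module 𝕜 F] {f : E →ₗ[𝕜] F}
    (hf : Function.Injective f) {s : Set E} {t : Set F} (hst : Set.MapsTo f s t) {x : E}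
    (hx : x ∈ s) (hfx : f x ∈ t.extremePoints 𝕜) : x ∈ s.extremePoints 𝕜 := by
  refine mem_extremePoints_iff_left.2 ⟨hx, fun u hu v hv huv => hf ?_⟩
  refine (mem_extremePoints_iff_left.1 hfx).2 _ (hst hu) _ (hst hv) ?_
  obtain ⟨a, b, ha, hb, hab, rfl⟩ := huv
  exact ⟨a, b, ha, hb, hab, by simp only [map_add, map_smul]⟩

variable {X Z : Type*} [NormedAddCommGroup X] [NormedSpace ℝ X]
  [NormedAddCommGroup Z] [NormedSpace ℝ Z]

theorem mem_extremePoints_closedBall_of_norm_map_eq_opNorm [StrictConvexSpace ℝ Z] {A : X →L[ℝ] Z}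
    (hA : Function.Injective A) {x : X} (hx : ‖x‖ = 1) (hAx : ‖A x‖ = ‖A‖) :
    x ∈ (Metric.closedBall (0 : X) 1).extremePoints ℝ := by
  have norm_A_ne : ‖A‖ ≠ 0 := by
    rw [← hAx, norm_ne_zero_iff, map_ne_zero_iff A hA, ← norm_ne_zero_iff, hx]
    exact one_ne_zero
  refine mem_extremePoints_of_map_mem_extremePoints (f := (A : X →ₗ[ℝ] Z)) hA
    (t := Metric.closedBall 0 ‖A‖) (fun y hy => ?_) (mem_closedBall_zero_iff.2 hx.le)
    (StrictConvexSpace.sphere_subset_extremePoints_closedBall 0 norm_A_ne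
      (mem_sphere_zero_iff_norm.2 hAx))
  exact mem_closedBall_zero_iff.2 (A.unit_le_opNorm y (mem_closedBall_zero_iff.1 hy))

end ExtremePoints

theorem injective_of_norm_sub_lt_of_forall_mul_norm_le {𝕜 E F : Type*} [NontriviallyNormedField 𝕜]
    [NormedAddCommGroup E] [NormedSpace 𝕜 E] [SeminormedAddCommGroup F] [NormedSpace 𝕜 F]
    {S T : E →L[𝕜] F} {m : ℝ} (hT : ∀ x, m * ‖x‖ ≤ ‖T x‖) (hST : ‖S - T‖ < m) :
    Function.Injective S := by
  refine (injective_iff_map_eq_zero S).2 fun x hx => ?_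
  have hle : m * ‖x‖ ≤ ‖S - T‖ * ‖x‖ := calc
    m * ‖x‖ ≤ ‖T x‖ := hT x
    _ = ‖(S - T) x‖ := by rw [sub_apply, hx, zero_sub, norm_neg]
    _ ≤ ‖S - T‖ * ‖x‖ := (S - T).le_opNorm x
  by_contra hne
  exact hST.not_ge (le_of_mul_le_mul_right hle (norm_pos_iff.2 hne))

section LpCoordinates

variable {𝕜 ι X : Type*} {Z : ι → Type*} {p : ℝ≥0∞} [NontriviallyNormedField 𝕜]
  [∀ i, NormedAddCommGroup (Z i)] [∀ i, NormedSpace 𝕜 (Z i)] [Fact (1 ≤ p)]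

theorem norm_lp_evalCLM_comp_le [SeminormedAddCommGroup X] [NormedSpace 𝕜 X]
    (S : X →L[𝕜] lp Z p) (i : ι) : ‖(lp.evalCLM 𝕜 Z p i).comp S‖ ≤ ‖S‖ :=
  ContinuousLinearMap.opNorm_le_bound _ (norm_nonneg S) fun x =>
    (lp.norm_apply_le_norm (zero_lt_one.trans_le Fact.out).ne' (S x) i).trans (S.le_opNorm x)

theorem lp_evalCLM_comp_singleContinuousLinearMap_self [DecidableEq ι] (i : ι) :
    (lp.evalCLM 𝕜 Z p i).comp (lp.singleContinuousLinearMap 𝕜 Z p i) =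
      ContinuousLinearMap.id 𝕜 (Z i) :=
  ContinuousLinearMap.ext fun z => lp.single_apply_self p i z

theorem lp_evalCLM_comp_singleContinuousLinearMap_of_ne [DecidableEq ι] {i j : ι} (hj : j ≠ i) :
    (lp.evalCLM 𝕜 Z p j).comp (lp.singleContinuousLinearMap 𝕜 Z p i) = 0 :=
  ContinuousLinearMap.ext fun z => lp.single_apply_ne p i z hj

end LpCoordinates

section LInftySum

variable {ι : Type*} {Z : ι → Type*} [∀ i, NormedAddCommGroup (Z i)]

theorem lp_norm_apply_eq_norm_of_forall_ne_norm_le {z : lp Z ∞} {i : ι} {r : ℝ} (hr : r < ‖z‖)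
    (h : ∀ j ≠ i, ‖z j‖ ≤ r) : ‖z i‖ = ‖z‖ := by
  refine (lp.norm_apply_le_norm ENNReal.top_ne_zero z i).antisymm ?_
  have : Nonempty ι := ⟨i⟩
  have hmax : ‖z‖ ≤ max ‖z i‖ r := lp.norm_le_of_forall_le' _ fun j => by
    by_cases hj : j = i
    · exact hj ▸ le_max_left _ _
    · exact (h j hj).trans (le_max_right _ _)
  exact (le_max_iff.1 hmax).resolve_right hr.not_ge

variable {X : Type*} [NormedAddCommGroup X] [NormedSpace ℝ X] [∀ i, NormedSpace ℝ (Z i)]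

theorem mem_extremePoints_closedBall_of_norm_sub_single_comp_lt [DecidableEq ι] {i : ι}
    [StrictConvexSpace ℝ (Z i)] {T : X →L[ℝ] Z i} {m : ℝ} (hm : m ≤ 1)
    (hT : ∀ x, m * ‖x‖ ≤ ‖T x‖) {S : X →L[ℝ] lp Z ∞}
    (hST : ‖S - (lp.singleContinuousLinearMap ℝ Z ∞ i).comp T‖ < m) (hS : ‖S‖ = 1) {x : X}
    (hx : ‖x‖ = 1) (hSx : ‖S x‖ = 1) : x ∈ (Metric.closedBall (0 : X) 1).extremePoints ℝ := by
  set D := S - (lp.singleContinuousLinearMap ℝ Z ∞ i).comp T with hD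
  set A := (lp.evalCLM ℝ Z ∞ i).comp S
  have eval_D : (lp.evalCLM ℝ Z ∞ i).comp D = A - T := by
    rw [hD, ContinuousLinearMap.comp_sub, ← ContinuousLinearMap.comp_assoc,
      lp_evalCLM_comp_singleContinuousLinearMap_self, ContinuousLinearMap.id_comp]
  have eval_D_of_ne : ∀ j ≠ i, (lp.evalCLM ℝ Z ∞ j).comp D = (lp.evalCLM ℝ Z ∞ j).comp S := by
    intro j hj
    rw [hD, ContinuousLinearMap.comp_sub, ← ContinuousLinearMap.comp_assoc,
      lp_evalCLM_comp_singleContinuousLinearMap_of_ne hj, ContinuousLinearMap.zero_comp, sub_zero]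
  have A_injective : Function.Injective A :=
    injective_of_norm_sub_lt_of_forall_mul_norm_le hT
      ((eval_D ▸ norm_lp_evalCLM_comp_le D i).trans_lt hST)
  have norm_coord_le : ∀ j ≠ i, ‖S x j‖ ≤ ‖D‖ := fun j hj => calc
    ‖S x j‖ = ‖((lp.evalCLM ℝ Z ∞ j).comp D) x‖ := by rw [eval_D_of_ne j hj]; rfl
    _ ≤ ‖D‖ := ContinuousLinearMap.unit_le_opNorm _ x hx.le |>.trans (norm_lp_evalCLM_comp_le D j)
  have norm_A_apply : ‖A x‖ = 1 :=
    (lp_norm_apply_eq_norm_of_forall_ne_norm_le (hSx ▸ hST.trans_le hm) norm_coord_le).trans hSx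
  have norm_A : ‖A‖ = 1 := ((norm_lp_evalCLM_comp_le S i).trans_eq hS).antisymm
    (norm_A_apply ▸ A.unit_le_opNorm x hx.le)
  exact mem_extremePoints_closedBall_of_norm_map_eq_opNorm A_injective hx
    (norm_A_apply.trans norm_A.symm)

theorem sphere_subset_closure_extremePoints_of_hasBPBp_lp [∀ i, StrictConvexSpace ℝ (Z i)]
    (hBPB : HasBPBp X (lp Z ∞))
    (hT : ∀ r < (1 : ℝ), ∃ (i : ι) (T : X →L[ℝ] Z i), ‖T‖ = 1 ∧ ∀ x, r * ‖x‖ ≤ ‖T x‖) :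
    Metric.sphere (0 : X) 1 ⊆ closure ((Metric.closedBall (0 : X) 1).extremePoints ℝ) := by
  classical
  obtain ⟨η, η_pos, hη⟩ := hBPB
  refine fun x₀ hx₀ => Metric.mem_closure_iff.2 fun ε hε => ?_
  rw [mem_sphere_zero_iff_norm] at hx₀
  set δ := min ε (1 / 2)
  have hδ : δ ∈ Set.Ioo (0 : ℝ) 1 :=
    ⟨lt_min hε one_half_pos, (min_le_right _ _).trans_lt one_half_lt_one⟩
  obtain ⟨r, r_gt, r_lt_one⟩ : ∃ r, max (1 - η δ) δ < r ∧ r < 1 :=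
    exists_between (max_lt (sub_lt_self 1 (η_pos δ hδ)) hδ.2)
  obtain ⟨η_lt_r, δ_lt_r⟩ := max_lt_iff.1 r_gt
  obtain ⟨i, T, norm_T, le_norm_T⟩ := hT r r_lt_one
  set T₀ : X →L[ℝ] lp Z ∞ := (lp.singleContinuousLinearMap ℝ Z ∞ i).comp T
  have norm_T₀_apply (x : X) : ‖T₀ x‖ = ‖T x‖ := lp.norm_single ENNReal.zero_lt_top i (T x)
  have norm_T₀ : ‖T₀‖ = 1 := (ContinuousLinearMap.opNorm_ext T₀ T norm_T₀_apply).trans norm_T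
  have T₀_almost_attains : 1 - η δ < ‖T₀ x₀‖ := calc
    1 - η δ < r * ‖x₀‖ := by rwa [hx₀, mul_one]
    _ ≤ ‖T₀ x₀‖ := (le_norm_T x₀).trans_eq (norm_T₀_apply x₀).symm
  obtain ⟨S, x, hx, hS, hSx, hxx₀, hST₀⟩ := hη δ hδ T₀ x₀ norm_T₀ hx₀ T₀_almost_attains
  refine ⟨x, mem_extremePoints_closedBall_of_norm_sub_single_comp_lt r_lt_one.le le_norm_T
    (hST₀.trans δ_lt_r) hS hx hSx, ?_⟩
  rw [dist_comm, dist_eq_norm]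
  exact hxx₀.trans_le (min_le_left _ _)

end LInftySum

theorem snd_eq_of_norm_eq_of_norm_add_eq {X Y : Type*} [SeminormedAddCommGroup X]
    [NormedAddCommGroup Y] [NormedSpace ℝ Y] [StrictConvexSpace ℝ Y] {p q : WithLp 2 (X × Y)}
    (hpq : ‖p‖ = ‖q‖) (h : ‖p + q‖ = ‖p‖ + ‖q‖) : p.snd = q.snd := by
  have p_sq := WithLp.prod_norm_sq_eq_of_L2 p
  have q_sq := WithLp.prod_norm_sq_eq_of_L2 q
  have sum_sq := WithLp.prod_norm_sq_eq_of_L2 (p + q)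
  rw [← hpq] at q_sq
  rw [h, ← hpq, WithLp.add_fst, WithLp.add_snd] at sum_sq
  have fst_sq_le : ‖p.fst + q.fst‖ ^ 2 ≤ (‖p.fst‖ + ‖q.fst‖) ^ 2 := by
    gcongr; exact norm_add_le _ _
  have snd_sq_le : ‖p.snd + q.snd‖ ^ 2 ≤ (‖p.snd‖ + ‖q.snd‖) ^ 2 := by
    gcongr; exact norm_add_le _ _
  have fst_sub_sq := sq_nonneg (‖p.fst‖ - ‖q.fst‖)
  have snd_sub_sq := sq_nonneg (‖p.snd‖ - ‖q.snd‖)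
  -- The parallelogram law for the norms of the coordinates makes all four inequalities equalities.
  have norm_snd_eq : ‖p.snd‖ = ‖q.snd‖ :=
    sub_eq_zero.1 (pow_eq_zero_iff two_ne_zero |>.1 (by linarith))
  have norm_snd_add : ‖p.snd + q.snd‖ = ‖p.snd‖ + ‖q.snd‖ :=
    (pow_left_inj₀ (norm_nonneg _) (by positivity) two_ne_zero).1 (by linarith)
  exact eq_of_norm_eq_of_norm_add_eq norm_snd_eq norm_snd_add

section GraphNorm

variable {X Y : Type*} [NormedAddCommGroup X] [NormedSpace ℝ X]
  [NormedAddCommGroup Y] [NormedSpace ℝ Y]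

/-- The space `X` renormed by the graph norm `√(‖x‖ ^ 2 + ‖f x‖ ^ 2)` of `f : X →L[ℝ] Y`. It is a
type synonym of `X`, rather than the graph of `f` itself, so that it lives in the universe
of `X`. -/
def GraphNormed (_f : X →L[ℝ] Y) : Type _ := X

namespace GraphNormed

variable (f : X →L[ℝ] Y)

instance : AddCommGroup (GraphNormed f) := inferInstanceAs (AddCommGroup X)

instance : Module ℝ (GraphNormed f) := inferInstanceAs (Module ℝ X)

/-- The identity map from `X` to its renorming `GraphNormed f`. -/
def of : X ≃ₗ[ℝ] GraphNormed f := LinearEquiv.refl ℝ X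

/-- The map `x ↦ (x, f x)` into the `ℓ²`-sum, from which `GraphNormed f` takes its norm. -/
def toWithLp : GraphNormed f →ₗ[ℝ] WithLp 2 (X × Y) :=
  (WithLp.linearEquiv 2 ℝ (X × Y)).symm.toLinearMap ∘ₗ
    (LinearMap.id.prod f.toLinearMap) ∘ₗ (of f).symm.toLinearMap

theorem toWithLp_injective : Function.Injective (toWithLp f) := fun _ _ h =>
  (of f).symm.injective (congrArg WithLp.fst h)

noncomputable instance : NormedAddCommGroup (GraphNormed f) :=
  NormedAddCommGroup.induced _ _ (toWithLp f) (toWithLp_injective f)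

noncomputable instance : NormedSpace ℝ (GraphNormed f) :=
  NormedSpace.induced ℝ _ _ (toWithLp f)

theorem norm_toWithLp (x : GraphNormed f) : ‖toWithLp f x‖ = ‖x‖ := rfl

theorem norm_of_sq (x : X) : ‖of f x‖ ^ 2 = ‖x‖ ^ 2 + ‖f x‖ ^ 2 :=
  WithLp.prod_norm_sq_eq_of_L2 (toWithLp f (of f x))

theorem norm_le_norm_of (x : X) : ‖x‖ ≤ ‖of f x‖ := by
  refine (pow_le_pow_iff_left₀ (norm_nonneg _) (norm_nonneg _) two_ne_zero).1 ?_
  rw [norm_of_sq]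
  exact le_add_of_nonneg_right (sq_nonneg _)

theorem norm_of_le (x : X) : ‖of f x‖ ≤ (1 + ‖f‖) * ‖x‖ := by
  have norm_of_le_add : ‖of f x‖ ≤ ‖x‖ + ‖f x‖ := by
    refine (pow_le_pow_iff_left₀ (norm_nonneg _) (by positivity) two_ne_zero).1 ?_
    rw [norm_of_sq, add_sq']
    exact le_add_of_nonneg_right (by positivity)
  calc ‖of f x‖ ≤ ‖x‖ + ‖f x‖ := norm_of_le_add
    _ ≤ ‖x‖ + ‖f‖ * ‖x‖ := by gcongr; exact f.le_opNorm x
    _ = (1 + ‖f‖) * ‖x‖ := by ring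

/-- The identity map `GraphNormed.of f` as an isomorphism: the graph norm is an equivalent norm. -/
noncomputable def ofL : X ≃L[ℝ] GraphNormed f :=
  (of f).toContinuousLinearEquivOfBounds (1 + ‖f‖) 1 (norm_of_le f) fun y => by
    simpa only [LinearEquiv.apply_symm_apply, one_mul] using norm_le_norm_of f ((of f).symm y)

theorem norm_le_norm_ofL (x : X) : ‖x‖ ≤ ‖ofL f x‖ := norm_le_norm_of f x

theorem opNorm_ofL_le : ‖(ofL f : X →L[ℝ] GraphNormed f)‖ ≤ 1 + ‖f‖ :=
  ContinuousLinearMap.opNorm_le_bound _ (by positivity) (norm_of_le f)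

instance [CompleteSpace X] : CompleteSpace (GraphNormed f) :=
  (completeSpace_congr (e := (ofL f).toEquiv) (ofL f).isUniformEmbedding).1 inferInstance

variable {f} in
theorem strictConvexSpace [StrictConvexSpace ℝ Y] (hf : Function.Injective f) :
    StrictConvexSpace ℝ (GraphNormed f) := by
  refine StrictConvexSpace.of_norm_add_ne_two fun x y hx hy hxy h => hxy ?_
  refine (of f).symm.injective (hf (snd_eq_of_norm_eq_of_norm_add_eq
    (p := toWithLp f x) (q := toWithLp f y) ?_ ?_))
  · rw [norm_toWithLp, norm_toWithLp, hx, hy]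
  · rw [← map_add, norm_toWithLp, norm_toWithLp, norm_toWithLp, hx, hy, h, one_add_one_eq_two]

end GraphNormed

theorem exists_opNorm_eq_one_forall_mul_norm_le_graphNormed_smul [Nontrivial X] (f : X →L[ℝ] Y)
    {r : ℝ} (hr : r < 1) : ∃ (t : Set.Ioi (0 : ℝ)) (T : X →L[ℝ] GraphNormed ((t : ℝ) • f)),
      ‖T‖ = 1 ∧ ∀ x, r * ‖x‖ ≤ ‖T x‖ := by
  obtain ⟨t, t_pos, ht⟩ := exists_pos_mul_lt (sub_pos.2 hr) ‖f‖
  set J := (GraphNormed.ofL (t • f)).toContinuousLinearMap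
  have J_pos : 0 < ‖J‖ := (GraphNormed.ofL (t • f)).norm_pos
  have J_le : ‖J‖ ≤ 2 - r := by
    have := GraphNormed.opNorm_ofL_le (t • f)
    rw [norm_smul, Real.norm_of_nonneg t_pos.le] at this
    linarith
  have r_le : r ≤ ‖J‖⁻¹ := by
    rw [← one_div, le_div_iff₀ J_pos]
    calc r * ‖J‖ ≤ (2 - ‖J‖) * ‖J‖ := by gcongr; linarith
      _ ≤ 1 := by linarith [sq_nonneg (‖J‖ - 1)]
  refine ⟨⟨t, t_pos⟩, ‖J‖⁻¹ • J, ?_, fun x => ?_⟩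
  · rw [norm_smul, norm_inv, norm_norm, inv_mul_cancel₀ J_pos.ne']
  · rw [smul_apply, norm_smul, norm_inv, norm_norm]
    gcongr
    exact GraphNormed.norm_le_norm_ofL (t • f) x

end GraphNorm

theorem extremePoints_dense_of_universal_BPB_domain_general.{u, v} {X : Type u}
    [NormedAddCommGroup X] [NormedSpace ℝ X] [CompleteSpace X]
    (huniv : ∀ (Z : Type u) [NormedAddCommGroup Z] [NormedSpace ℝ Z] [CompleteSpace Z],
      HasBPBp X Z)
    {Y : Type v} [NormedAddCommGroup Y] [NormedSpace ℝ Y] [StrictConvexSpace ℝ Y]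
    {f : X →L[ℝ] Y} (hf : Function.Injective f) :
    Metric.sphere (0 : X) 1 ⊆
      closure (Set.extremePoints ℝ (Metric.closedBall (0 : X) 1)) := by
  rcases subsingleton_or_nontrivial X with _ | _
  · rw [Metric.sphere_eq_empty_of_subsingleton one_ne_zero]
    exact Set.empty_subset _
  have (t : Set.Ioi (0 : ℝ)) : StrictConvexSpace ℝ (GraphNormed ((t : ℝ) • f)) :=
    GraphNormed.strictConvexSpace ((smul_right_injective Y t.2.ne').comp hf)
  exact sphere_subset_closure_extremePoints_of_hasBPBp_lp
    (huniv (lp (fun t : Set.Ioi (0 : ℝ) => GraphNormed ((t : ℝ) • f)) ∞))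
    fun _ hr => exists_opNorm_eq_one_forall_mul_norm_le_graphNormed_smul f hr

/-- If `X` is a universal BPB domain space and admits an equivalent strictly convex norm
(i.e. there is a strictly convex Banach space `X'` and a linear isomorphism `e : X ≃ₗ[ℝ] X'`
with `c‖x‖ ≤ ‖e x‖ ≤ C‖x‖`), then the extreme points of the closed unit ball of `X` are
dense in the unit sphere of `X`. -/
theorem extremePoints_dense_of_universal_BPB_domain.{u} (X : Type u)
    [NormedAddCommGroup X] [NormedSpace ℝ X] [CompleteSpace X]
    (huniv : ∀ (Z : Type u) [NormedAddCommGroup Z] [NormedSpace ℝ Z] [CompleteSpace Z],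
      HasBPBp X Z)
    (hren : ∃ (X' : Type u) (_ : NormedAddCommGroup X') (_ : NormedSpace ℝ X')
      (_ : CompleteSpace X') (_ : StrictConvexSpace ℝ X') (e : X ≃ₗ[ℝ] X') (c C : ℝ),
        0 < c ∧ 0 < C ∧ ∀ x : X, c * ‖x‖ ≤ ‖e x‖ ∧ ‖e x‖ ≤ C * ‖x‖) :
    Metric.sphere (0 : X) 1 ⊆
      closure (Set.extremePoints ℝ (Metric.closedBall (0 : X) 1)) := by
  obtain ⟨X', _, _, _, _, e, c, C, -, -, he⟩ := hren
  exact extremePoints_dense_of_universal_BPB_domain_general huniv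
    (f := e.toLinearMap.mkContinuous C fun x => (he x).2) e.injective
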